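/- Let N = (P,T,F,Var) be a loop-less UDPN, i, f ℚ⁺-markings, H a histogram (over Var × D), and t ∈ T such that f = i + Δ(t)·H. Then there exists a ℚ⁺-run ρ such that i →ρ_{ℚ⁺} f. -/

import Mathlib

open Finset

noncomputable section
open scoped Classical

/-- An unordered data Petri net over places `P`, transitions `T`, variables `V`,
with countably infinite data domain `D = ℕ`.
`pre p t` is the function `F(p,t) : V → ℕ` and `post t p` is `F(t,p) : V → ℕ`. -/
structure UDPN (P T V : Type) where
  pre : P → T → V → ℕ
  post : T → P → V → ℕ

/-- An X-step `(c, t, π)`: coefficient, transition and mode. -/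
structure Step (T V : Type) where
  c : ℚ
  t : T
  π : V → ℕ

variable {P T V : Type} [Fintype P] [Fintype T] [Fintype V]

/-- The `P × V` rational matrix `F(•,t)`. -/
def preMat (N : UDPN P T V) (t : T) (p : P) (x : V) : ℚ := (N.pre p t x : ℚ)

/-- The displacement `Δ(t) = F(t,•) − F(•,t)` as a `P × V` rational matrix. -/
def delta (N : UDPN P T V) (t : T) (p : P) (x : V) : ℚ :=
  (N.post t p x : ℚ) - (N.pre p t x : ℚ)

/-- `A ∘ π⁻¹`: the `P × ℕ` matrix with `(A∘π⁻¹)(p,α) = A(p,x)` if `α = π x`,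
and `0` if `α` is outside the range of `π`. (For injective `π` the sum has at
most one nonzero summand.) -/
def compInv (A : P → V → ℚ) (π : V → ℕ) (p : P) (α : ℕ) : ℚ :=
  ∑ x : V, if π x = α then A p x else 0

/-- Only finitely many nonzero columns. -/
def FinCols (m : P → ℕ → ℚ) : Prop := {α : ℕ | ∃ p, m p α ≠ 0}.Finite

/-- `IsMarking pos m`: `m` is an X-marking; `pos = true` corresponds to `X = ℚ⁺`
(all entries nonnegative), `pos = false` to `X = ℚ`. -/
def IsMarking (pos : Bool) (m : P → ℕ → ℚ) : Prop :=
  FinCols m ∧ (pos = true → ∀ p α, 0 ≤ m p α)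

/-- Data values of a marking. -/
def dvalM (m : P → ℕ → ℚ) : Set ℕ := {α | ∃ p, m p α ≠ 0}

/-- A valid X-step: nonnegative coefficient and injective mode.  -/
def IsStep (s : Step T V) : Prop := 0 ≤ s.c ∧ Function.Injective s.π

/-- A valid X-run: a finite sequence of X-steps. -/
def IsRun (ρ : List (Step T V)) : Prop := ∀ s ∈ ρ, IsStep s

/-- The effect `c · (Δ(t) ∘ π⁻¹)` of a step. -/
def stepEffect (N : UDPN P T V) (s : Step T V) (p : P) (α : ℕ) : ℚ :=
  s.c * compInv (delta N s.t) s.π p α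

/-- The effect `Δ(ρ)` of a run. -/
def runEffect (N : UDPN P T V) (ρ : List (Step T V)) (p : P) (α : ℕ) : ℚ :=
  (ρ.map fun s => stepEffect N s p α).sum

/-- A step `(c,t,π)` is fireable at `m` if `m − c·(F(•,t)∘π⁻¹)` is again an
X-marking: finitely many nonzero columns and (when `pos`) nonnegative entries. -/
def stepFireable (pos : Bool) (N : UDPN P T V) (m : P → ℕ → ℚ) (s : Step T V) : Prop :=
  FinCols (fun p α => m p α - s.c * compInv (preMat N s.t) s.π p α) ∧
  (pos = true → ∀ p α, 0 ≤ m p α - s.c * compInv (preMat N s.t) s.π p α)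

/-- A run is fireable at `m` if each step is fireable at the corresponding
intermediate marking. -/
def runFireable (pos : Bool) (N : UDPN P T V) : (P → ℕ → ℚ) → List (Step T V) → Prop
  | _, [] => True
  | m, s :: ρ => stepFireable pos N m s ∧
      runFireable pos N (fun p α => m p α + stepEffect N s p α) ρ

/-- `m →ρ_X m'` : `ρ` is fireable at `m` and `m' = m + Δ(ρ)`. -/
def Reaches (pos : Bool) (N : UDPN P T V) (i : P → ℕ → ℚ) (ρ : List (Step T V))
    (f : P → ℕ → ℚ) : Prop :=
  runFireable pos N i ρ ∧ f = fun p α => i p α + runEffect N ρ p α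

/-- `f` is X-reachable from `i`. -/
def Reach (pos : Bool) (N : UDPN P T V) (i f : P → ℕ → ℚ) : Prop :=
  ∃ ρ, IsRun ρ ∧ Reaches pos N i ρ f

/-- `vars(t)`. -/
def varsOf (N : UDPN P T V) (t : T) : Set V :=
  {x | ∃ p, N.pre p t x ≠ 0 ∨ N.post t p x ≠ 0}

/-- `maxvars(N) = max_{t ∈ T} |vars(t)|` (0 if `T` is empty). -/
def maxvars (N : UDPN P T V) : ℕ :=
  Finset.univ.sup fun t : T => (varsOf N t).ncard

/-- `dval(ρ)`: the data values used by a run. -/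
def runDval (N : UDPN P T V) (ρ : List (Step T V)) : Set ℕ :=
  {α | ∃ s ∈ ρ, ∃ x ∈ varsOf N s.t, s.π x = α}
/-- For `α ∈ E`: the least element of `{β ∈ E | β > α}` if nonempty, else `min E`. -/
def nextE (E : Finset ℕ) (α : ℕ) : ℕ :=
  if h : (E.filter fun β => α < β).Nonempty then (E.filter fun β => α < β).min' h
  else if h' : E.Nonempty then E.min' h' else 0

/-- The inverse of `nextE` on `E`: the greatest element of `{γ ∈ E | γ < β}` if
nonempty, else `max E`. -/
def prevE (E : Finset ℕ) (β : ℕ) : ℕ :=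
  if h : (E.filter fun γ => γ < β).Nonempty then (E.filter fun γ => γ < β).max' h
  else if h' : E.Nonempty then E.max' h' else 0

/-- The mode `π'` of `rot(E,ω)`, characterized by: the permutation matrix `P'` of
`π'` satisfies `P'(•,α) = P(•,α)` for `α ∉ E` and `P'(•,α) = P(•, nextE α)` for
`α ∈ E` (i.e. `π' x = α ↔ π x = nextE α` for `α ∈ E`). -/
def rotMode {V : Type} (E : Finset ℕ) (π : V → ℕ) (x : V) : ℕ :=
  if π x ∈ E then prevE E (π x) else π x

/-- `rot(E,ω)`. -/
def rotStep (E : Finset ℕ) (s : Step T V) : Step T V := ⟨s.c, s.t, rotMode E s.π⟩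

/-- The uniformization `U(E,ω)`: the concatenation
`rot^0(E, ω/|E|) ⋯ rot^{|E|−1}(E, ω/|E|)`. -/
def uniformize (E : Finset ℕ) (s : Step T V) : List (Step T V) :=
  (List.range E.card).map fun k => (rotStep E)^[k] ⟨s.c / (E.card : ℚ), s.t, s.π⟩

/-- Column `α` of `Δ(t)·P_π` is zero. -/
def zeroCol (N : UDPN P T V) (s : Step T V) (α : ℕ) : Prop :=
  ∀ p, compInv (delta N s.t) s.π p α = 0

/-- The transposition of the data values `α` and `β`. -/
def swapVal (α β γ : ℕ) : ℕ := if γ = α then β else if γ = β then α else γ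

/-- `R(α,E,ω)`: if column `α` of `Δ(t)·P_π` is zero then `ω` itself; otherwise the
step whose permutation matrix is obtained from `P_π` by exchanging columns `α` and
`β`, where `β` is the least datum in `E` whose column of `Δ(t)·P_π` is zero. -/
def replaceStep (N : UDPN P T V) (α : ℕ) (E : Finset ℕ) (s : Step T V) : Step T V :=
  if zeroCol N s α then s
  else if h : (E.filter fun β => zeroCol N s β).Nonempty then
    ⟨s.c, s.t, fun x => swapVal α ((E.filter fun β => zeroCol N s β).min' h) (s.π x)⟩
  else s

/-- `dec(E,α,σ)`: the concatenation `U(E,R(α,E,σ(1))) ⋯ U(E,R(α,E,σ(n)))`. -/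
def decRun (N : UDPN P T V) (α : ℕ) (E : Finset ℕ) (σ : List (Step T V)) :
    List (Step T V) :=
  σ.flatMap fun s => uniformize E (replaceStep N α E s)

/-- A histogram of order `q`: a `V × ℕ` matrix with nonnegative rational entries
and finitely many nonzero columns, every row summing to `q` and every column
summing to at most `q`. -/
def IsHistogram (H : V → ℕ → ℚ) (q : ℚ) : Prop :=
  0 ≤ q ∧ (∀ x α, 0 ≤ H x α) ∧ ({α | ∃ x, H x α ≠ 0}).Finite ∧
  (∀ x, ∑ᶠ α, H x α = q) ∧ (∀ α, ∑ x : V, H x α ≤ q)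

/-- `col(H)`: the nonzero columns of `H`. -/
def colH (H : V → ℕ → ℚ) : Set ℕ := {α | ∃ x, H x α ≠ 0}

/-- The permutation matrix `P_π` of a mode `π`. -/
def permMat {V : Type} (π : V → ℕ) (x : V) (α : ℕ) : ℚ := if π x = α then 1 else 0

/-- `Pre(ρ)`: pairs `(p,α)` of tokens consumed by the run `ρ`. -/
def preSet (N : UDPN P T V) (ρ : List (Step T V)) : Set (P × ℕ) :=
  {pa | ∃ s ∈ ρ, ∃ x, 0 < N.pre pa.1 s.t x ∧ s.π x = pa.2}

/-- `Post(ρ)`: pairs `(p,α)` of tokens produced by the run `ρ`. -/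
def postSet (N : UDPN P T V) (ρ : List (Step T V)) : Set (P × ℕ) :=
  {pa | ∃ s ∈ ρ, ∃ x, 0 < N.post s.t pa.1 x ∧ s.π x = pa.2}

/-- A loop-less UDPN: `PrePlace(t) ∩ PostPlace(t) = ∅` for every transition. -/
def IsLoopless (N : UDPN P T V) : Prop :=
  ∀ t : T, ¬ ∃ p : P, (∃ x, 0 < N.pre p t x) ∧ (∃ x, 0 < N.post t p x)

/-- A histogram is a conical combination of permutation matrices of modes: complete it to a
square matrix with constant row and column sums and apply Birkhoff's theorem. -/
theorem IsHistogram.exists_eq_sum_permMat {H : V → ℕ → ℚ} {q : ℚ} (hH : IsHistogram H q) :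
    ∃ (ι : Type) (_ : Fintype ι) (w : ι → ℚ) (π : ι → V → ℕ), (∀ j, 0 ≤ w j) ∧
      (∀ j, Function.Injective (π j)) ∧ ∀ x α, H x α = ∑ j, w j * permMat (π j) x α := by
  obtain ⟨hq, hnonneg, hfin, hrow, hcol⟩ := hH
  obtain ⟨n, hn⟩ : ∃ n : ℕ, ∀ x α, n ≤ α → H x α = 0 := by
    obtain ⟨b, hb⟩ := hfin.bddAbove
    refine ⟨b + 1, fun x α hα => ?_⟩
    by_contra hne
    have := hb (show α ∈ {α | ∃ x, H x α ≠ 0} from ⟨x, hne⟩)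
    omega
  have hrowFin : ∀ x, ∑ α : Fin n, H x α = q := fun x => by
    rw [← hrow x, Fin.sum_univ_eq_sum_range (H x) n, finsum_eq_sum_of_support_subset]
    intro α hα
    by_contra hlt
    exact hα (hn x α (by simpa using hlt))
  let M : Matrix (V ⊕ Fin n) (V ⊕ Fin n) ℚ :=
    Matrix.fromBlocks 0 (Matrix.of fun x α => H x α) (Matrix.of fun α x => H x α)
      (Matrix.diagonal fun α : Fin n => q - ∑ x, H x α)
  have hM : ∃ M' ∈ doublyStochastic ℚ (V ⊕ Fin n), M = q • M' := by
    rw [exists_mem_doublyStochastic_eq_smul_iff hq]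
    refine ⟨?_, ?_, ?_⟩
    · rintro (x | α) (y | β)
      · simp [M]
      · simp [M, hnonneg]
      · simp [M, hnonneg]
      · by_cases h : α = β
        · subst h
          simp [M, hcol]
        · simp [M, h]
    · rintro (x | α)
      · simp [M, hrowFin]
      · simp [M, Matrix.diagonal_apply]
    · rintro (x | α)
      · simp [M, hrowFin]
      · simp [M, Matrix.diagonal_apply]
  obtain ⟨M', hM', hMM'⟩ := hM
  obtain ⟨w, hw, -, hsum⟩ := exists_eq_sum_perm_of_mem_doublyStochastic hM'
  have hentry : ∀ i j, M i j =
      ∑ σ : Equiv.Perm (V ⊕ Fin n), q * w σ * if σ i = j then 1 else 0 := by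
    intro i j
    rw [hMM', ← hsum]
    simp [Matrix.sum_apply, Finset.mul_sum, PEquiv.toMatrix_apply, Equiv.toPEquiv_apply]
  let g : V ⊕ Fin n → ℕ := Sum.elim (fun y => n + Fintype.equivFin V y) (fun α => α)
  have hg : Function.Injective g := by
    refine Function.Injective.sumElim (fun a b h => ?_) Fin.val_injective fun a b h => ?_
    · exact (Fintype.equivFin V).injective (Fin.ext (by simpa using h))
    · have := b.isLt
      omega
  refine ⟨Equiv.Perm (V ⊕ Fin n), inferInstance, fun σ => q * w σ, fun σ x => g (σ (Sum.inl x)),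
    fun σ => mul_nonneg hq (hw σ),
    fun σ => hg.comp (σ.injective.comp Sum.inl_injective), fun x α => ?_⟩
  have hpush : ∑ σ : Equiv.Perm (V ⊕ Fin n), q * w σ * permMat (fun x => g (σ (Sum.inl x))) x α
      = ∑ j, if g j = α then M (Sum.inl x) j else 0 := by
    simp_rw [hentry, ← Finset.sum_filter, permMat]
    rw [Finset.sum_comm]
    refine Finset.sum_congr rfl fun σ _ => ?_
    simp
  rw [hpush, Fintype.sum_sum_type]
  by_cases hα : α < n
  · rw [Finset.sum_eq_zero (by simp [M]), zero_add, Finset.sum_eq_single ⟨α, hα⟩]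
    · simp [g, M]
    · intro β _ hβ
      have : (β : ℕ) ≠ α := fun h => hβ (Fin.ext h)
      simp [g, this]
    · simp
  · rw [hn x α (not_lt.mp hα), Finset.sum_eq_zero (by simp [M]), Finset.sum_eq_zero, zero_add]
    intro β _
    have : (β : ℕ) ≠ α := by have := β.isLt; omega
    simp [g, this]

theorem compInv_nonneg {P V : Type} [Fintype V] {A : P → V → ℚ} {p : P}
    (hA : ∀ x, 0 ≤ A p x) (π : V → ℕ) (α : ℕ) :
    0 ≤ compInv A π p α :=
  Finset.sum_nonneg fun x _ => by
    split
    · exact hA x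
    · exact le_rfl

theorem compInv_eq_sum_mul_permMat {P V : Type} [Fintype V] (A : P → V → ℚ) (π : V → ℕ)
    (p : P) (α : ℕ) :
    compInv A π p α = ∑ x, A p x * permMat π x α := by
  simp [compInv, permMat]

theorem compInv_eq_zero {P V : Type} [Fintype V] (A : P → V → ℚ) {π : V → ℕ} {α : ℕ}
    (hα : α ∉ Set.range π) (p : P) :
    compInv A π p α = 0 :=
  Finset.sum_eq_zero fun x _ => if_neg fun h => hα ⟨x, h⟩

theorem FinCols.add_mul_compInv {P V : Type} [Fintype V] {m : P → ℕ → ℚ} (hm : FinCols m)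
    (c : ℚ) (A : P → V → ℚ) (π : V → ℕ) : FinCols fun p α => m p α + c * compInv A π p α := by
  refine (hm.union (Set.finite_range π)).subset ?_
  rintro α ⟨p, hp⟩
  by_contra hα
  simp only [Set.mem_union, Set.mem_ofPred_eq, not_or, not_exists, not_not] at hα
  exact hp (by beta_reduce; rw [hα.1 p, compInv_eq_zero A (by simpa using hα.2), mul_zero, add_zero])

theorem stepEffect_eq {P T V : Type} [Fintype V] (N : UDPN P T V) (s : Step T V) (p : P) (α : ℕ) :
    stepEffect N s p α =
      s.c * compInv (fun p x => (N.post s.t p x : ℚ)) s.π p α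
        - s.c * compInv (preMat N s.t) s.π p α := by
  simp only [stepEffect, compInv_eq_sum_mul_permMat, delta, preMat, sub_mul,
    Finset.sum_sub_distrib, mul_sub]

theorem stepEffect_nonpos {P T V : Type} [Fintype V] {N : UDPN P T V} {s : Step T V}
    (hs : IsStep s) {p : P} (hp : ∀ x, N.post s.t p x = 0) (α : ℕ) : stepEffect N s p α ≤ 0 := by
  have hpre := mul_nonneg hs.1
    (compInv_nonneg (A := preMat N s.t) (p := p) (fun x => Nat.cast_nonneg _) s.π α)
  have hpost : compInv (fun p x => (N.post s.t p x : ℚ)) s.π p α = 0 := by simp [compInv, hp]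
  rw [stepEffect_eq, hpost]
  linarith

/-- In a loop-less net, a run that uses a single transition is fireable at a marking as soon as
its total effect leaves the marking nonnegative. -/
theorem runFireable_of_add_runEffect_nonneg {P T V : Type} [Fintype V] {N : UDPN P T V}
    (hN : IsLoopless N) (t : T) (ρ : List (Step T V)) (m : P → ℕ → ℚ) (hρ : IsRun ρ)
    (ht : ∀ s ∈ ρ, s.t = t) (hm : IsMarking true m)
    (hend : ∀ p α, 0 ≤ m p α + runEffect N ρ p α) :
    runFireable true N m ρ := by
  induction ρ generalizing m with
  | nil => trivial
  | cons s ρ ih =>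
    have hs : IsStep s := hρ s List.mem_cons_self
    have hst : s.t = t := ht s List.mem_cons_self
    have hρ' : IsRun ρ := fun r hr => hρ r (List.mem_cons_of_mem _ hr)
    have ht' : ∀ r ∈ ρ, r.t = t := fun r hr => ht r (List.mem_cons_of_mem _ hr)
    have hcons : ∀ p α, runEffect N (s :: ρ) p α = stepEffect N s p α + runEffect N ρ p α := by
      simp [runEffect]
    have hpre : ∀ p α, 0 ≤ m p α - s.c * compInv (preMat N s.t) s.π p α := by
      intro p α
      by_cases hp : ∃ x, 0 < N.pre p t x
      · have hpost : ∀ x, N.post t p x = 0 := fun x => by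
          by_contra h
          exact hN t ⟨p, hp, x, Nat.pos_of_ne_zero h⟩
        have hrest : runEffect N ρ p α ≤ 0 := by
          refine (List.sum_le_card_nsmul _ 0 fun e he => ?_).trans_eq (nsmul_zero _)
          obtain ⟨r, hr, rfl⟩ := List.mem_map.mp he
          exact stepEffect_nonpos (hρ' r hr) (by rw [ht' r hr]; exact hpost) α
        have hzero : compInv (fun p x => (N.post s.t p x : ℚ)) s.π p α = 0 := by
          simp [compInv, hst, hpost]
        have := hend p α
        rw [hcons, stepEffect_eq, hzero] at this
        linarith
      · have hzero : compInv (preMat N s.t) s.π p α = 0 := by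
          simp only [not_exists, not_lt, Nat.le_zero] at hp
          simp [compInv, preMat, hst, hp]
        rw [hzero, mul_zero, sub_zero]
        exact hm.2 rfl p α
    refine ⟨⟨?_, fun _ => hpre⟩, ih _ hρ' ht' ⟨hm.1.add_mul_compInv s.c _ s.π, fun _ p α => ?_⟩ ?_⟩
    · simpa [sub_eq_add_neg] using hm.1.add_mul_compInv (-s.c) (preMat N s.t) s.π
    · have hpost := mul_nonneg hs.1 (compInv_nonneg (A := fun p x => (N.post s.t p x : ℚ))
        (p := p) (fun x => Nat.cast_nonneg _) s.π α)
      have := hpre p α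
      beta_reduce
      rw [stepEffect_eq]
      linarith
    · intro p α
      rw [add_assoc, ← hcons]
      exact hend p α

/-- In a loop-less UDPN, if `f = i + Δ(t)·H` for a histogram
`H` and a transition `t`, then there is a ℚ⁺-run `ρ` with `i →ρ_{ℚ⁺} f`. -/
theorem loopless_histogram_fireable
    (N : UDPN P T V) (hN : IsLoopless N)
    (i f : P → ℕ → ℚ)
    (hi : IsMarking true i) (hf : IsMarking true f)
    (H : V → ℕ → ℚ) (q : ℚ) (hH : IsHistogram H q) (t : T)
    (heq : ∀ p α, f p α = i p α + ∑ x : V, delta N t p x * H x α) :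
    ∃ ρ : List (Step T V), IsRun ρ ∧ Reaches true N i ρ f := by
  obtain ⟨ι, _, w, π, hw, hπ, hsum⟩ := hH.exists_eq_sum_permMat
  let ρ : List (Step T V) := (Finset.univ : Finset ι).toList.map fun j => ⟨w j, t, π j⟩
  have hρ : IsRun ρ := by
    intro s hs
    obtain ⟨j, -, rfl⟩ := List.mem_map.mp hs
    exact ⟨hw j, hπ j⟩
  have ht : ∀ s ∈ ρ, s.t = t := by
    intro s hs
    obtain ⟨j, -, rfl⟩ := List.mem_map.mp hs
    rfl
  have hfinal : ∀ p α, f p α = i p α + runEffect N ρ p α := by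
    intro p α
    rw [heq, runEffect, List.map_map, Finset.sum_map_toList]
    simp only [Function.comp_apply, stepEffect, compInv_eq_sum_mul_permMat, hsum, Finset.mul_sum]
    rw [Finset.sum_comm]
    simp only [mul_left_comm]
  refine ⟨ρ, hρ, runFireable_of_add_runEffect_nonneg hN t ρ i hρ ht hi fun p α => ?_, ?_⟩
  · rw [← hfinal]
    exact hf.2 rfl p α
  · funext p α
    exact hfinal p α
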